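/- (Quadratic lower bound on divergence for non-product RAAGs.) Suppose Γ has at least two vertices and the complement graph Γᶜ (same vertex set, with u,v adjacent in Γᶜ iff u ≠ v and u,v are not adjacent in Γ) is connected, i.e., A_Γ is not a nontrivial direct product. Then for every ρ with 0 < ρ ≤ 1 there is a constant c > 0 such that for every natural number r there exist elements x, y ∈ A_Γ with |x| = |y| = r such that every path in the Cayley graph of A_Γ from x to y, all of whose vertices have word length at least ρ·r, has length at least c·r². -/

import Mathlib

/-- The commutator relators of the right-angled Artin group on the graph `Γ`. -/
def raagRels {V : Type*} (Γ : SimpleGraph V) : Set (FreeGroup V) :=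
  {r | ∃ u v : V, Γ.Adj u v ∧
    r = FreeGroup.of u * FreeGroup.of v * (FreeGroup.of u)⁻¹ * (FreeGroup.of v)⁻¹}

/-- The right-angled Artin group `A_Γ` on the graph `Γ`. -/
abbrev RAAG {V : Type*} (Γ : SimpleGraph V) : Type _ :=
  PresentedGroup (raagRels Γ)

/-- The generator of `A_Γ` corresponding to the vertex `v`. -/
def RAAG.gen {V : Type*} (Γ : SimpleGraph V) (v : V) : RAAG Γ :=
  PresentedGroup.of v

/-- Word length of `g` with respect to a generating set `X`: the least `n` such that
`g` is a product of `n` elements of `X ∪ X⁻¹`. -/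
noncomputable def wlen {G : Type*} [Group G] (X : Set G) (g : G) : ℕ :=
  sInf {n | ∃ l : List G, l.length = n ∧ (∀ x ∈ l, x ∈ X ∨ x⁻¹ ∈ X) ∧ l.prod = g}

/-- Word length in `A_Γ` with respect to the vertex generating set. -/
noncomputable def RAAG.wordLength {V : Type*} (Γ : SimpleGraph V) (g : RAAG Γ) : ℕ :=
  wlen (Set.range (RAAG.gen Γ)) g

/-- The letter `v^e` (with `e = true` for `v` and `e = false` for `v⁻¹`). -/
def RAAG.letter {V : Type*} (Γ : SimpleGraph V) (v : V) (e : Bool) : RAAG Γ :=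
  if e then RAAG.gen Γ v else (RAAG.gen Γ v)⁻¹

/-!
The hyperplanes of the universal cover of the Salvetti complex measure distance in `A_Γ`: the word
length of `a⁻¹ * b` is the number of hyperplanes separating `a` from `b`, counted by a cocycle of
`A_Γ`. Let a closed walk in `Γᶜ` through all vertices spell a periodic geodesic, the axis. Because
consecutive letters do not commute, the hyperplanes dual to the axis are pairwise disjoint, and a
hyperplane crossing two of them carries a vertex adjacent to every letter read in between. Hence
two axis hyperplanes a bounded distance `M` apart are crossed by no common hyperplane, and a path
from one to the other that starts at distance `d` from the axis has length at least `d - M`. A path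
joining the two ends of a segment of length `2 * r` while avoiding the ball of radius `ρ * r` around
its midpoint crosses linearly many such strips at linear distance from the axis, so its length is
quadratic in `r`.
-/

section WordLength

variable {G : Type*} [Group G] {X : Set G}

theorem wlen_prod_le {l : List G} (hl : ∀ x ∈ l, x ∈ X ∨ x⁻¹ ∈ X) :
    wlen X l.prod ≤ l.length :=
  Nat.sInf_le ⟨l, rfl, hl, rfl⟩

theorem exists_list_length_eq_wlen (hX : Subgroup.closure X = ⊤) (g : G) :
    ∃ l : List G, l.length = wlen X g ∧ (∀ x ∈ l, x ∈ X ∨ x⁻¹ ∈ X) ∧ l.prod = g := by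
  have hg : g ∈ (Subgroup.closure X).toSubmonoid := by simp [hX]
  rw [Subgroup.closure_toSubmonoid] at hg
  obtain ⟨l, hl, hprod⟩ := Submonoid.exists_list_of_mem_closure hg
  exact Nat.sInf_mem
    (s := {n | ∃ l : List G, l.length = n ∧ (∀ x ∈ l, x ∈ X ∨ x⁻¹ ∈ X) ∧ l.prod = g})
    ⟨l.length, l, rfl, hl, hprod⟩

theorem wlen_one : wlen X (1 : G) = 0 :=
  Nat.le_zero.1 (wlen_prod_le (l := []) (by simp))

theorem wlen_mul_le (hX : Subgroup.closure X = ⊤) (g h : G) :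
    wlen X (g * h) ≤ wlen X g + wlen X h := by
  obtain ⟨l, hl_length, hl, rfl⟩ := exists_list_length_eq_wlen hX g
  obtain ⟨m, hm_length, hm, rfl⟩ := exists_list_length_eq_wlen hX h
  rw [← hl_length, ← hm_length, ← List.prod_append, ← List.length_append]
  exact wlen_prod_le fun x hx => (List.mem_append.1 hx).elim (hl x) (hm x)

theorem wlen_inv (g : G) : wlen X g⁻¹ = wlen X g := by
  have h_invert : ∀ (h : G) (n : ℕ),
      (∃ l : List G, l.length = n ∧ (∀ x ∈ l, x ∈ X ∨ x⁻¹ ∈ X) ∧ l.prod = h) →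
        ∃ l : List G, l.length = n ∧ (∀ x ∈ l, x ∈ X ∨ x⁻¹ ∈ X) ∧ l.prod = h⁻¹ := by
    rintro _ _ ⟨l, rfl, hl, rfl⟩
    refine ⟨(l.map (·⁻¹)).reverse, by simp, fun x hx => ?_, List.prod_inv_reverse l |>.symm⟩
    have hx_inv : x⁻¹ ∈ l := by simpa using hx
    simpa using (hl _ hx_inv).symm
  exact congrArg sInf (Set.ext fun n => ⟨fun h => by simpa using h_invert _ n h, h_invert g n⟩)

theorem le_wlen_of_mul_le_add_one (hX : Subgroup.closure X = ⊤) {N : G → ℤ} (h_one : N 1 ≤ 0)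
    (h_mul : ∀ g x, (x ∈ X ∨ x⁻¹ ∈ X) → N (g * x) ≤ N g + 1) (g : G) : N g ≤ wlen X g := by
  obtain ⟨l, hl_length, hl, rfl⟩ := exists_list_length_eq_wlen hX g
  rw [← hl_length]
  clear hl_length
  induction l using List.reverseRecOn with
  | nil => simpa using h_one
  | append_singleton l x ih =>
    have hl' := ih fun y hy => hl y (by simp [hy])
    have hx := h_mul l.prod x (hl x (by simp))
    simp only [List.prod_append, List.prod_singleton, List.length_append, List.length_singleton]
    push_cast
    linarith

theorem wlen_inv_mul_le_of_steps (hX : Subgroup.closure X = ⊤) {q : ℕ → G} {i n : ℕ}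
    (hq : ∀ k < n, wlen X ((q (i + k))⁻¹ * q (i + k + 1)) ≤ 1) :
    wlen X ((q i)⁻¹ * q (i + n)) ≤ n := by
  induction n with
  | zero => simp [wlen_one]
  | succ n ih =>
    calc wlen X ((q i)⁻¹ * q (i + n + 1))
        = wlen X ((q i)⁻¹ * q (i + n) * ((q (i + n))⁻¹ * q (i + n + 1))) := by
          rw [mul_assoc, mul_inv_cancel_left]
      _ ≤ wlen X ((q i)⁻¹ * q (i + n)) + wlen X ((q (i + n))⁻¹ * q (i + n + 1)) :=
          wlen_mul_le hX _ _
      _ ≤ n + 1 := add_le_add (ih fun k hk => hq k (by omega)) (hq n (by omega))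

end WordLength

theorem exists_closed_walk_support_superset {V : Type*} {G : SimpleGraph V}
    (hG : G.Preconnected) (a : V) (S : Finset V) :
    ∃ w : G.Walk a a, ∀ s ∈ S, s ∈ w.support := by
  classical
  induction S using Finset.induction with
  | empty => exact ⟨.nil, by simp⟩
  | insert s S _ ih =>
    obtain ⟨w, hw⟩ := ih
    obtain ⟨p⟩ := hG a s
    refine ⟨(p.append p.reverse).append w, fun t ht => ?_⟩
    simp only [SimpleGraph.Walk.mem_support_append_iff]
    rcases Finset.mem_insert.1 ht with rfl | ht
    exacts [.inl (.inl p.end_mem_support), .inr (hw t ht)]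

namespace RAAG

variable {V : Type*} {Γ : SimpleGraph V}

section Words

theorem commute_gen {u v : V} (h : Γ.Adj u v) : Commute (gen Γ u) (gen Γ v) := by
  have h_rel : gen Γ u * gen Γ v * (gen Γ u)⁻¹ * (gen Γ v)⁻¹ = 1 :=
    PresentedGroup.one_of_mem ⟨u, v, h, rfl⟩
  rwa [mul_inv_eq_one, mul_inv_eq_iff_eq_mul] at h_rel

theorem closure_range_gen : Subgroup.closure (Set.range (gen Γ)) = ⊤ :=
  PresentedGroup.closure_range_of _

/-- The homomorphism out of `A_Γ` given by its universal property. -/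
def lift {G : Type*} [Group G] (f : V → G) (hf : ∀ u v, Γ.Adj u v → Commute (f u) (f v)) :
    RAAG Γ →* G :=
  PresentedGroup.toGroup (f := f) (by
    rintro _ ⟨u, v, h, rfl⟩
    simp [(hf u v h).eq])

theorem lift_gen {G : Type*} [Group G] {f : V → G} (hf : ∀ u v, Γ.Adj u v → Commute (f u) (f v))
    (v : V) : lift f hf (gen Γ v) = f v :=
  PresentedGroup.toGroup.of _

theorem mem_range_gen_or_inv_iff {x : RAAG Γ} :
    (x ∈ Set.range (gen Γ) ∨ x⁻¹ ∈ Set.range (gen Γ)) ↔ ∃ v e, x = letter Γ v e := by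
  simp only [Set.mem_range, letter, Bool.exists_bool, eq_comm (a := x), exists_or,
    Bool.false_eq_true, if_false, if_true, inv_eq_iff_eq_inv, or_comm]

theorem letter_not (v : V) (e : Bool) : letter Γ v (!e) = (letter Γ v e)⁻¹ := by
  cases e <;> simp [letter]

theorem wordLength_mul_le (g h : RAAG Γ) :
    wordLength Γ (g * h) ≤ wordLength Γ g + wordLength Γ h :=
  wlen_mul_le closure_range_gen g h

theorem wordLength_inv (g : RAAG Γ) : wordLength Γ g⁻¹ = wordLength Γ g :=
  wlen_inv g

/-- The element of `A_Γ` spelled by a word, a pair `(v, e)` standing for `letter Γ v e`. -/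
def wordProd (Γ : SimpleGraph V) (l : List (V × Bool)) : RAAG Γ :=
  (l.map fun s => letter Γ s.1 s.2).prod

theorem wordProd_append (l m : List (V × Bool)) :
    wordProd Γ (l ++ m) = wordProd Γ l * wordProd Γ m := by
  simp [wordProd]

theorem wordProd_singleton (v : V) (e : Bool) : wordProd Γ [(v, e)] = letter Γ v e := by
  simp [wordProd]

theorem wordLength_wordProd_le (l : List (V × Bool)) : wordLength Γ (wordProd Γ l) ≤ l.length := by
  simpa [wordLength, wordProd] using wlen_prod_le (X := Set.range (gen Γ))
    (l := l.map fun s => letter Γ s.1 s.2) fun x hx => by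
      obtain ⟨s, -, rfl⟩ := List.mem_map.1 hx
      exact mem_range_gen_or_inv_iff.2 ⟨s.1, s.2, rfl⟩

theorem exists_wordProd_eq (g : RAAG Γ) :
    ∃ l : List (V × Bool), l.length = wordLength Γ g ∧ wordProd Γ l = g := by
  obtain ⟨l, hl_length, hl, rfl⟩ := exists_list_length_eq_wlen closure_range_gen g
  have hl_range : ∀ x ∈ l, x ∈ Set.range fun s : V × Bool => letter Γ s.1 s.2 := fun x hx => by
    obtain ⟨v, e, rfl⟩ := mem_range_gen_or_inv_iff.1 (hl x hx)
    exact ⟨(v, e), rfl⟩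
  obtain ⟨m, rfl⟩ := (Set.range_list_map _).ge hl_range
  exact ⟨m, by simpa [wordLength] using hl_length, rfl⟩

theorem wordLength_letter_le (v : V) (e : Bool) : wordLength Γ (letter Γ v e) ≤ 1 := by
  simpa [wordProd_singleton] using wordLength_wordProd_le (Γ := Γ) [(v, e)]

theorem exists_eq_letter_of_wordLength_eq_one {g : RAAG Γ} (hg : wordLength Γ g = 1) :
    ∃ v e, g = letter Γ v e := by
  obtain ⟨l, hl_length, rfl⟩ := exists_wordProd_eq g
  obtain ⟨⟨v, e⟩, rfl⟩ := List.length_eq_one_iff.1 (hl_length.trans hg)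
  exact ⟨v, e, wordProd_singleton v e⟩

theorem le_wordLength_of_mul_letter_le_add_one {N : RAAG Γ → ℤ} (h_one : N 1 ≤ 0)
    (h_mul : ∀ g v e, N (g * letter Γ v e) ≤ N g + 1) (g : RAAG Γ) : N g ≤ wordLength Γ g :=
  le_wlen_of_mul_le_add_one closure_range_gen h_one
    (fun g _ hx => by
      obtain ⟨v, e, rfl⟩ := mem_range_gen_or_inv_iff.1 hx
      exact h_mul g v e) g

end Words

section Hyperplanes

/-- The standard parabolic subgroup of `A_Γ` generated by the vertices in `Λ`. -/
def parabolic (Γ : SimpleGraph V) (Λ : Set V) : Subgroup (RAAG Γ) :=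
  Subgroup.closure (gen Γ '' Λ)

/-- The hyperplanes of the universal cover of the Salvetti complex of `A_Γ`. The edges dual to a
hyperplane all carry the same vertex `v`, and the starting points of these edges form a left coset
of the parabolic subgroup on the link of `v`; the hyperplane is encoded by that pair. -/
abbrev Hyperplane (Γ : SimpleGraph V) : Type _ :=
  Σ v : V, RAAG Γ ⧸ parabolic Γ (Γ.neighborSet v)

/-- The hyperplane dual to the edge from `g` to `g * gen Γ v`. -/
def hyperplane (v : V) (g : RAAG Γ) : Hyperplane Γ := ⟨v, g⟩

theorem smul_hyperplane (a g : RAAG Γ) (v : V) : a • hyperplane v g = hyperplane v (a * g) := rfl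

theorem hyperplane_eq_iff {v w : V} {g h : RAAG Γ} :
    hyperplane v g = hyperplane w h ↔ v = w ∧ g⁻¹ * h ∈ parabolic Γ (Γ.neighborSet v) := by
  constructor
  · intro heq
    obtain ⟨rfl, h_coset⟩ := Sigma.mk.inj heq
    exact ⟨rfl, QuotientGroup.eq.1 (eq_of_heq h_coset)⟩
  · rintro ⟨rfl, h_mem⟩
    exact congrArg (Sigma.mk v) (QuotientGroup.eq.2 h_mem)

theorem commute_gen_of_mem_parabolic {v : V} {a : RAAG Γ}
    (ha : a ∈ parabolic Γ (Γ.neighborSet v)) : Commute a (gen Γ v) := by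
  have h_le : parabolic Γ (Γ.neighborSet v) ≤ Subgroup.centralizer {gen Γ v} := by
    refine (Subgroup.closure_le _).2 ?_
    rintro _ ⟨u, hu, rfl⟩
    exact Subgroup.mem_centralizer_singleton_iff.2 (commute_gen hu).symm.eq
  exact Subgroup.mem_centralizer_singleton_iff.1 (h_le ha)

theorem commute_letter_of_mem_parabolic {v : V} {a : RAAG Γ}
    (ha : a ∈ parabolic Γ (Γ.neighborSet v)) (e : Bool) : Commute a (letter Γ v e) := by
  cases e
  exacts [(commute_gen_of_mem_parabolic ha).inv_right, commute_gen_of_mem_parabolic ha]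

theorem gen_smul_hyperplane_one {u v : V} (h : Γ.Adj u v) :
    gen Γ u • hyperplane v (1 : RAAG Γ) = hyperplane v 1 := by
  have h_mem : gen Γ u ∈ parabolic Γ (Γ.neighborSet v) :=
    Subgroup.subset_closure ⟨u, h.symm, rfl⟩
  rw [smul_hyperplane, mul_one, eq_comm, hyperplane_eq_iff]
  exact ⟨rfl, by simpa using h_mem⟩

/-- The carrier of `K`, restricted to the starting points of the edges dual to `K`. -/
def carrier (K : Hyperplane Γ) : Set (RAAG Γ) := {g | hyperplane K.1 g = K}

theorem mem_carrier_iff {K : Hyperplane Γ} {a g : RAAG Γ} (ha : a ∈ carrier K) :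
    g ∈ carrier K ↔ a⁻¹ * g ∈ parabolic Γ (Γ.neighborSet K.1) := by
  rw [carrier, Set.mem_ofPred_eq] at ha ⊢
  rw [← ha, eq_comm, hyperplane_eq_iff]
  exact and_iff_right rfl

/-- Two hyperplanes cross: they carry adjacent vertices and share a carrier point, at which their
dual edges then span a square. -/
def Transverse (K K' : Hyperplane Γ) : Prop :=
  Γ.Adj K.1 K'.1 ∧ (carrier K ∩ carrier K').Nonempty

/-- The hyperplane dual to the edge from `g` to `g * letter Γ v e`. -/
def dualHyperplane (g : RAAG Γ) (v : V) (e : Bool) : Hyperplane Γ :=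
  hyperplane v (if e then g else g * (gen Γ v)⁻¹)

theorem dualHyperplane_eq_or (g : RAAG Γ) (v : V) (e : Bool) :
    dualHyperplane g v e = hyperplane v g ∨
      dualHyperplane g v e = hyperplane v (g * letter Γ v e) := by
  cases e <;> simp [dualHyperplane, letter]

theorem dualHyperplane_mul_letter_not (g : RAAG Γ) (v : V) (e : Bool) :
    dualHyperplane (g * letter Γ v e) v (!e) = dualHyperplane g v e := by
  cases e <;> simp [dualHyperplane, letter]

theorem inv_mul_mem_of_dualHyperplane_eq {a b : RAAG Γ} {v w : V} {e : Bool}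
    (h : dualHyperplane a v e = dualHyperplane b w e) :
    v = w ∧ a⁻¹ * b ∈ parabolic Γ (Γ.neighborSet v) := by
  obtain ⟨rfl, h_mem⟩ := hyperplane_eq_iff.1 h
  refine ⟨rfl, ?_⟩
  cases e
  · have h_conj : gen Γ v * (a⁻¹ * b) * (gen Γ v)⁻¹ ∈ parabolic Γ (Γ.neighborSet v) := by
      simpa [mul_assoc] using h_mem
    have h_comm := (commute_gen_of_mem_parabolic h_conj).eq
    rw [inv_mul_cancel_right] at h_comm
    rwa [← mul_left_cancel h_comm] at h_conj
  · exact h_mem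

end Hyperplanes

section Crossing

open Classical in
/-- The value at `gen Γ v` of the homomorphism `crossingHom`: it records that the edge from `1` to
`gen Γ v` crosses `hyperplane v 1` only. -/
noncomputable def crossingGen (v : V) :
    (Hyperplane Γ → Multiplicative ℤ) ⋊[mulAutArrow] RAAG Γ :=
  ⟨fun K => .ofAdd (if K = hyperplane v 1 then 1 else 0), gen Γ v⟩

theorem commute_crossingGen {u v : V} (h : Γ.Adj u v) :
    Commute (crossingGen (Γ := Γ) u) (crossingGen v) := by
  have h_fix {u v : V} (h : Γ.Adj u v) (K : Hyperplane Γ) :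
      (crossingGen (Γ := Γ) v).left ((gen Γ u)⁻¹ • K) = (crossingGen v).left K := by
    have h_iff : (gen Γ u)⁻¹ • K = hyperplane v 1 ↔ K = hyperplane v 1 := by
      rw [inv_smul_eq_iff, gen_smul_hyperplane_one h]
    classical
    simp only [crossingGen, h_iff]
  refine SemidirectProduct.ext (funext fun K => ?_) (commute_gen h)
  change (crossingGen u).left K * (crossingGen v).left ((gen Γ u)⁻¹ • K) =
    (crossingGen v).left K * (crossingGen u).left ((gen Γ v)⁻¹ • K)
  rw [h_fix h, h_fix h.symm, mul_comm]

/-- The hyperplanes crossed by a path from `1` to `g`, counted with sign, form a 1-cocycle of `A_Γ`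
with values in `Hyperplane Γ → ℤ`; the cocycle is encoded as a homomorphism to the semidirect
product that lifts the identity. -/
noncomputable def crossingHom :
    RAAG Γ →* (Hyperplane Γ → Multiplicative ℤ) ⋊[mulAutArrow] RAAG Γ :=
  lift crossingGen fun _ _ => commute_crossingGen

theorem crossingHom_gen (v : V) : crossingHom (gen Γ v) = crossingGen v :=
  lift_gen _ v

theorem crossingHom_right (g : RAAG Γ) : (crossingHom g).right = g := by
  have h_id : SemidirectProduct.rightHom.comp (crossingHom (Γ := Γ)) = MonoidHom.id _ :=
    PresentedGroup.ext fun v => congrArg SemidirectProduct.right (crossingHom_gen v)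
  exact DFunLike.congr_fun h_id g

/-- The signed number of times a path from `1` to `g` crosses the hyperplane `K`. -/
noncomputable def crossing (g : RAAG Γ) (K : Hyperplane Γ) : ℤ := ((crossingHom g).left K).toAdd

theorem crossing_one (K : Hyperplane Γ) : crossing (1 : RAAG Γ) K = 0 := by
  simp [crossing]

theorem crossing_mul (g h : RAAG Γ) (K : Hyperplane Γ) :
    crossing (g * h) K = crossing g K + crossing h (g⁻¹ • K) := by
  rw [crossing, map_mul, SemidirectProduct.mul_left, crossingHom_right]
  rfl

theorem crossing_sub_crossing (a b : RAAG Γ) (K : Hyperplane Γ) :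
    crossing b K - crossing a K = crossing (a⁻¹ * b) (a⁻¹ • K) := by
  have h := crossing_mul a (a⁻¹ * b) K
  rw [mul_inv_cancel_left] at h
  linarith

open Classical in
theorem crossing_mul_gen (g : RAAG Γ) (v : V) (K : Hyperplane Γ) :
    crossing (g * gen Γ v) K = crossing g K + if K = hyperplane v g then 1 else 0 := by
  have h_gen (K : Hyperplane Γ) : crossing (gen Γ v) K = if K = hyperplane v 1 then 1 else 0 := by
    rw [crossing, crossingHom_gen]
    rfl
  simp only [crossing_mul, h_gen, inv_smul_eq_iff, smul_hyperplane, mul_one]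

/-- The exponent of the letter `letter Γ v e`. -/
def letterSign (e : Bool) : ℤ := if e then 1 else -1

theorem abs_letterSign (e : Bool) : |letterSign e| = 1 := by
  cases e <;> rfl

open Classical in
theorem crossing_mul_letter (g : RAAG Γ) (v : V) (e : Bool) (K : Hyperplane Γ) :
    crossing (g * letter Γ v e) K =
      crossing g K + if K = dualHyperplane g v e then letterSign e else 0 := by
  cases e
  · have h := crossing_mul_gen (g * (gen Γ v)⁻¹) v K
    rw [inv_mul_cancel_right] at h
    change crossing (g * (gen Γ v)⁻¹) K = crossing g K +
      if K = hyperplane v (g * (gen Γ v)⁻¹) then -1 else 0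
    split_ifs at h ⊢ <;> linarith
  · exact crossing_mul_gen g v K

theorem eq_dualHyperplane_of_crossing_ne {g : RAAG Γ} {v : V} {e : Bool} {K : Hyperplane Γ}
    (h : crossing (g * letter Γ v e) K ≠ crossing g K) : K = dualHyperplane g v e := by
  classical
  by_contra hK
  exact h (by rw [crossing_mul_letter, if_neg hK, add_zero])

theorem mem_carrier_or_of_crossing_ne {g h : RAAG Γ} {K : Hyperplane Γ}
    (h_step : wordLength Γ (g⁻¹ * h) = 1) (hK : crossing h K ≠ crossing g K) :
    g ∈ carrier K ∨ h ∈ carrier K := by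
  obtain ⟨v, e, h_letter⟩ := exists_eq_letter_of_wordLength_eq_one h_step
  obtain rfl : h = g * letter Γ v e := by rw [← h_letter, mul_inv_cancel_left]
  obtain rfl := eq_dualHyperplane_of_crossing_ne hK
  exact (dualHyperplane_eq_or g v e).imp Eq.symm Eq.symm

theorem exists_mem_carrier_of_crossing_ne {q : ℕ → RAAG Γ} {i L : ℕ} (hiL : i ≤ L)
    (hq : ∀ k < L, wordLength Γ ((q k)⁻¹ * q (k + 1)) = 1) {K : Hyperplane Γ}
    (hK : crossing (q i) K ≠ crossing (q L) K) : ∃ k, i ≤ k ∧ k ≤ L ∧ q k ∈ carrier K := by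
  induction L, hiL using Nat.le_induction with
  | base => exact absurd rfl hK
  | succ L hiL ih =>
    by_cases h_prev : crossing (q i) K = crossing (q L) K
    · rcases mem_carrier_or_of_crossing_ne (hq L L.lt_succ_self) (h_prev ▸ hK.symm) with h | h
      exacts [⟨L, hiL, L.le_succ, h⟩, ⟨L + 1, by omega, le_rfl, h⟩]
    · obtain ⟨k, hik, hkL, hk⟩ := ih (fun k hk => hq k (by omega)) h_prev
      exact ⟨k, hik, by omega, hk⟩

theorem exists_mem_parabolic_of_crossing_ne {Λ : Set V} {a s : RAAG Γ} {K : Hyperplane Γ}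
    (hs : s ∈ parabolic Γ Λ) (hK : crossing (a * s) K ≠ crossing a K) :
    K.1 ∈ Λ ∧ ∃ t ∈ parabolic Γ Λ, a * t ∈ carrier K := by
  induction hs using Subgroup.closure_induction_right with
  | one => simp at hK
  | mul_right s hs x hx ih =>
    obtain ⟨v, hv, rfl⟩ := hx
    by_cases h_prev : crossing (a * s) K = crossing a K
    · rw [← mul_assoc, ← h_prev] at hK
      obtain rfl := eq_dualHyperplane_of_crossing_ne (e := true) hK
      exact ⟨hv, s, hs, rfl⟩
    · exact ih h_prev
  | mul_inv_cancel s hs x hx ih =>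
    obtain ⟨v, hv, rfl⟩ := hx
    by_cases h_prev : crossing (a * s) K = crossing a K
    · rw [← mul_assoc, ← h_prev] at hK
      obtain rfl := eq_dualHyperplane_of_crossing_ne (e := false) hK
      refine ⟨hv, s * (gen Γ v)⁻¹, mul_mem hs (inv_mem (Subgroup.subset_closure ⟨v, hv, rfl⟩)), ?_⟩
      rw [← mul_assoc]
      rfl
    · exact ih h_prev

theorem transverse_of_crossing_ne {K K' : Hyperplane Γ} {a b : RAAG Γ} (ha : a ∈ carrier K)
    (hb : b ∈ carrier K) (h : crossing a K' ≠ crossing b K') : Transverse K K' := by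
  obtain ⟨h_adj, t, ht, ht'⟩ := exists_mem_parabolic_of_crossing_ne (a := a) (K := K')
    ((mem_carrier_iff ha).1 hb) (by rw [mul_inv_cancel_left]; exact h.symm)
  exact ⟨h_adj, a * t, (mem_carrier_iff ha).2 (by rwa [inv_mul_cancel_left]), ht'⟩

theorem crossing_eq_of_not_transverse {K K' : Hyperplane Γ} {a b : RAAG Γ} (ha : a ∈ carrier K)
    (hb : b ∈ carrier K) (h : ¬Transverse K K') : crossing a K' = crossing b K' :=
  not_not.1 fun h_ne => h (transverse_of_crossing_ne ha hb h_ne)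

theorem not_transverse_of_disjoint {K K' : Hyperplane Γ} (h : Disjoint (carrier K) (carrier K')) :
    ¬Transverse K K' :=
  fun h_trans => Set.not_disjoint_iff_nonempty_inter.2 h_trans.2 h

end Crossing

section Metric

theorem sum_abs_crossing_sub_le (F : Finset (Hyperplane Γ)) (a b : RAAG Γ) :
    ∑ K ∈ F, |crossing b K - crossing a K| ≤ wordLength Γ (a⁻¹ * b) := by
  classical
  have h_step (g : RAAG Γ) (v : V) (e : Bool) :
      ∑ K ∈ F, |crossing (a * (g * letter Γ v e)) K - crossing a K| ≤
        ∑ K ∈ F, |crossing (a * g) K - crossing a K| + 1 := by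
    calc ∑ K ∈ F, |crossing (a * (g * letter Γ v e)) K - crossing a K|
        ≤ ∑ K ∈ F, (|crossing (a * g) K - crossing a K| +
            if K = dualHyperplane (a * g) v e then 1 else 0) := by
          refine Finset.sum_le_sum fun K _ => ?_
          rw [← mul_assoc, crossing_mul_letter, add_sub_right_comm]
          refine (abs_add_le _ _).trans (add_le_add_right (le_of_eq ?_) _)
          split_ifs
          exacts [abs_letterSign e, abs_zero]
      _ ≤ ∑ K ∈ F, |crossing (a * g) K - crossing a K| + 1 := by
          rw [Finset.sum_add_distrib, Finset.sum_ite_eq']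
          split_ifs <;> simp
  simpa using le_wordLength_of_mul_letter_le_add_one
    (N := fun g => ∑ K ∈ F, |crossing (a * g) K - crossing a K|) (by simp) h_step (a⁻¹ * b)

theorem exists_letter_of_sign_mul_crossing_neg {l : List (V × Bool)} {e : Bool}
    {K : Hyperplane Γ} (h : letterSign e * crossing (wordProd Γ l) K < 0) :
    ∃ l₁ v l₂, l = l₁ ++ [(v, !e)] ++ l₂ ∧ K = dualHyperplane (wordProd Γ l₁) v (!e) := by
  classical
  induction l using List.reverseRecOn with
  | nil => simp [wordProd, crossing_one] at h
  | append_singleton l s ih =>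
    obtain ⟨v, f⟩ := s
    by_cases h_prev : letterSign e * crossing (wordProd Γ l) K < 0
    · obtain ⟨l₁, w, l₂, rfl, hK⟩ := ih h_prev
      exact ⟨l₁, w, l₂ ++ [(v, f)], by simp, hK⟩
    · rw [wordProd_append, wordProd_singleton, crossing_mul_letter] at h
      by_cases hK : K = dualHyperplane (wordProd Γ l) v f
      · obtain rfl : f = !e := by
          rw [if_pos hK] at h
          cases e <;> cases f <;> simp_all [letterSign]
          all_goals omega
        exact ⟨l, v, [], by simp, hK⟩
      · rw [if_neg hK, add_zero] at h
        exact absurd h h_prev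

theorem wordLength_mul_letter_lt {g : RAAG Γ} {v : V} {e : Bool}
    (h : letterSign e * crossing g (dualHyperplane g v e) < 0) :
    wordLength Γ (g * letter Γ v e) < wordLength Γ g := by
  obtain ⟨l, hl_length, rfl⟩ := exists_wordProd_eq g
  obtain ⟨l₁, w, l₂, rfl, hK⟩ := exists_letter_of_sign_mul_crossing_neg h
  simp only [wordProd_append, wordProd_singleton, letter_not, List.length_append,
    List.length_singleton] at hK hl_length ⊢
  have h_dual : dualHyperplane (wordProd Γ l₁ * letter Γ w (!e)) w e =
      dualHyperplane (wordProd Γ l₁ * (letter Γ w e)⁻¹ * wordProd Γ l₂) v e := by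
    simpa using (dualHyperplane_mul_letter_not (wordProd Γ l₁) w (!e)).trans hK.symm
  obtain ⟨rfl, h_mem⟩ := inv_mul_mem_of_dualHyperplane_eq h_dual
  have h_comm : Commute (wordProd Γ l₂) (letter Γ w e) :=
    commute_letter_of_mem_parabolic (by simpa [letter_not, mul_assoc] using h_mem) e
  have h_cancel : wordProd Γ l₁ * (letter Γ w e)⁻¹ * wordProd Γ l₂ * letter Γ w e =
      wordProd Γ (l₁ ++ l₂) := by
    rw [wordProd_append, mul_assoc, h_comm.eq, mul_assoc, inv_mul_cancel_left]
  have h_short := wordLength_wordProd_le (Γ := Γ) (l₁ ++ l₂)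
  rw [List.length_append] at h_short
  rw [h_cancel]
  omega

theorem abs_crossing_mul_letter [DecidableEq (Hyperplane Γ)] {g : RAAG Γ} {v : V} {e : Bool}
    (h : wordLength Γ g ≤ wordLength Γ (g * letter Γ v e)) (K : Hyperplane Γ) :
    |crossing (g * letter Γ v e) K| =
      |crossing g K| + if K = dualHyperplane g v e then 1 else 0 := by
  rw [crossing_mul_letter]
  by_cases hK : K = dualHyperplane g v e
  · have h_sign : 0 ≤ letterSign e * crossing g K :=
      not_lt.1 fun h_neg => h.not_gt (wordLength_mul_letter_lt (hK ▸ h_neg))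
    rw [if_pos hK, if_pos hK, ← abs_letterSign e]
    refine (abs_add_eq_add_abs_iff _ _).2 ?_
    cases e <;> simp_all [letterSign]
  · simp [hK]

theorem exists_wordLength_le_sum_abs_crossing (g : RAAG Γ) :
    ∃ F : Finset (Hyperplane Γ), (wordLength Γ g : ℤ) ≤ ∑ K ∈ F, |crossing g K| := by
  classical
  suffices h_reduced : ∀ l : List (V × Bool), l.length ≤ wordLength Γ (wordProd Γ l) →
      ∃ F : Finset (Hyperplane Γ), (l.length : ℤ) ≤ ∑ K ∈ F, |crossing (wordProd Γ l) K| by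
    obtain ⟨l, hl_length, rfl⟩ := exists_wordProd_eq g
    exact hl_length ▸ h_reduced l hl_length.le
  intro l
  induction l using List.reverseRecOn with
  | nil => exact fun _ => ⟨∅, by simp⟩
  | append_singleton l s ih =>
    obtain ⟨v, e⟩ := s
    rw [wordProd_append, wordProd_singleton, List.length_append, List.length_singleton]
    intro h_reduced
    have h_prefix : l.length ≤ wordLength Γ (wordProd Γ l) := by
      have := wordLength_mul_le (wordProd Γ l) (letter Γ v e)
      have := wordLength_letter_le (Γ := Γ) v e
      omega
    have h_grow := (wordLength_wordProd_le (Γ := Γ) l).trans ((Nat.le_succ _).trans h_reduced)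
    obtain ⟨F, hF⟩ := ih h_prefix
    refine ⟨insert (dualHyperplane (wordProd Γ l) v e) F, ?_⟩
    simp only [abs_crossing_mul_letter h_grow, Finset.sum_add_distrib, Finset.sum_ite_eq',
      Finset.mem_insert_self, if_true]
    push_cast
    gcongr
    exact hF.trans (Finset.sum_le_sum_of_subset_of_nonneg (Finset.subset_insert _ _)
      fun _ _ _ => abs_nonneg _)

theorem exists_wordLength_le_sum_abs_crossing_sub (a b : RAAG Γ) :
    ∃ F : Finset (Hyperplane Γ),
      (wordLength Γ (a⁻¹ * b) : ℤ) ≤ ∑ K ∈ F, |crossing b K - crossing a K| := by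
  classical
  obtain ⟨F, hF⟩ := exists_wordLength_le_sum_abs_crossing (a⁻¹ * b)
  refine ⟨F.image (a • ·), ?_⟩
  rw [Finset.sum_image (MulAction.injective a).injOn]
  simpa only [crossing_sub_crossing, inv_smul_smul] using hF

/-- No hyperplane crosses both `K₁` and `K₂`. Strong separation in the sense of Behrstock and
Charney asks in addition that `K₁` and `K₂` do not cross each other. -/
def StronglySeparated (K₁ K₂ : Hyperplane Γ) : Prop :=
  ∀ K, Transverse K₁ K → ¬Transverse K₂ K

theorem StronglySeparated.wordLength_le {K₁ K₂ : Hyperplane Γ} (h_sep : StronglySeparated K₁ K₂)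
    {a a' b b' : RAAG Γ} (ha : a ∈ carrier K₁) (ha' : a' ∈ carrier K₁) (hb : b ∈ carrier K₂)
    (hb' : b' ∈ carrier K₂) :
    wordLength Γ (a⁻¹ * a') ≤ wordLength Γ (a'⁻¹ * b') + wordLength Γ (a⁻¹ * b) := by
  -- A hyperplane separating `a` from `a'` crosses `K₁`, so it misses `K₂` and cannot separate `b`
  -- from `b'`.
  have h_hyperplane (K : Hyperplane Γ) : |crossing a' K - crossing a K| ≤
      |crossing b' K - crossing a' K| + |crossing b K - crossing a K| := by
    by_cases hK : Transverse K₁ K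
    · rw [crossing_eq_of_not_transverse hb' hb (h_sep K hK), abs_sub_comm _ (crossing a' K)]
      exact abs_sub_le _ _ _
    · rw [crossing_eq_of_not_transverse ha' ha hK, sub_self, abs_zero]
      positivity
  obtain ⟨F, hF⟩ := exists_wordLength_le_sum_abs_crossing_sub a a'
  have h_total : (wordLength Γ (a⁻¹ * a') : ℤ) ≤
      wordLength Γ (a'⁻¹ * b') + wordLength Γ (a⁻¹ * b) :=
    calc (wordLength Γ (a⁻¹ * a') : ℤ)
        ≤ ∑ K ∈ F, |crossing a' K - crossing a K| := hF
      _ ≤ ∑ K ∈ F, (|crossing b' K - crossing a' K| + |crossing b K - crossing a K|) :=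
          Finset.sum_le_sum fun K _ => h_hyperplane K
      _ ≤ wordLength Γ (a'⁻¹ * b') + wordLength Γ (a⁻¹ * b) := by
          rw [Finset.sum_add_distrib]
          exact add_le_add (sum_abs_crossing_sub_le F a' b') (sum_abs_crossing_sub_le F a b)
  exact_mod_cast h_total

end Metric

section Axis

/-- The vertices of the ray from `1` in the Cayley graph that reads the letters `v 0, v 1, …`. -/
def axis (Γ : SimpleGraph V) (v : ℕ → V) : ℕ → RAAG Γ
  | 0 => 1
  | n + 1 => axis Γ v n * gen Γ (v n)

/-- The hyperplane dual to the edge of the ray `axis Γ v` that starts at `axis Γ v k`. -/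
def axisHyperplane (Γ : SimpleGraph V) (v : ℕ → V) (k : ℕ) : Hyperplane Γ :=
  hyperplane (v k) (axis Γ v k)

/-- The homomorphism to `ℤ` that sends every generator to `1`. -/
def exponentSum (Γ : SimpleGraph V) : RAAG Γ →* Multiplicative ℤ :=
  lift (fun _ => .ofAdd 1) fun _ _ _ => Commute.all _ _

variable {v : ℕ → V}

theorem exponentSum_gen (u : V) : exponentSum Γ (gen Γ u) = .ofAdd 1 :=
  lift_gen _ u

theorem exponentSum_le_wordLength (g : RAAG Γ) : (exponentSum Γ g).toAdd ≤ wordLength Γ g := by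
  refine le_wordLength_of_mul_letter_le_add_one (N := fun g => (exponentSum Γ g).toAdd)
    (by simp) (fun g u e => ?_) g
  cases e <;> simp [letter, exponentSum_gen]

theorem exponentSum_axis (n : ℕ) : exponentSum Γ (axis Γ v n) = .ofAdd (n : ℤ) := by
  induction n with
  | zero => simp [axis]
  | succ n ih => simp [axis, ih, exponentSum_gen, ← ofAdd_add]

theorem wordLength_inv_axis_mul_axis (j n : ℕ) :
    wordLength Γ ((axis Γ v j)⁻¹ * axis Γ v (j + n)) = n := by
  refine le_antisymm (wlen_inv_mul_le_of_steps closure_range_gen fun k _ => ?_) ?_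
  · rw [axis, inv_mul_cancel_left]
    exact wordLength_letter_le (v (j + k)) true
  · simpa [exponentSum_axis] using exponentSum_le_wordLength ((axis Γ v j)⁻¹ * axis Γ v (j + n))

theorem wordLength_axis (n : ℕ) : wordLength Γ (axis Γ v n) = n := by
  simpa [axis] using wordLength_inv_axis_mul_axis (Γ := Γ) (v := v) 0 n

theorem wordLength_inv_axis_add_mul_le (j n : ℕ) (g : RAAG Γ) :
    wordLength Γ ((axis Γ v (j + n))⁻¹ * g) ≤ n + wordLength Γ ((axis Γ v j)⁻¹ * g) :=
  calc wordLength Γ ((axis Γ v (j + n))⁻¹ * g)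
      = wordLength Γ (((axis Γ v j)⁻¹ * axis Γ v (j + n))⁻¹ * ((axis Γ v j)⁻¹ * g)) := by
        group
    _ ≤ n + wordLength Γ ((axis Γ v j)⁻¹ * g) := by
        refine (wordLength_mul_le _ _).trans_eq ?_
        rw [wordLength_inv, wordLength_inv_axis_mul_axis]

theorem axis_mem_carrier (k : ℕ) : axis Γ v k ∈ carrier (axisHyperplane Γ v k) := rfl

theorem monotone_crossing_axis (K : Hyperplane Γ) : Monotone fun n => crossing (axis Γ v n) K := by
  classical
  refine monotone_nat_of_le_succ fun n => ?_
  rw [axis, crossing_mul_gen]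
  split_ifs <;> simp

theorem crossing_axis_lt {j k l : ℕ} (hjk : j ≤ k) (hkl : k < l) :
    crossing (axis Γ v j) (axisHyperplane Γ v k) <
      crossing (axis Γ v l) (axisHyperplane Γ v k) := by
  classical
  calc crossing (axis Γ v j) (axisHyperplane Γ v k)
      ≤ crossing (axis Γ v k) (axisHyperplane Γ v k) := monotone_crossing_axis _ hjk
    _ < crossing (axis Γ v (k + 1)) (axisHyperplane Γ v k) := by
        rw [axis, crossing_mul_gen, axisHyperplane, if_pos rfl]
        exact lt_add_one _
    _ ≤ crossing (axis Γ v l) (axisHyperplane Γ v k) := monotone_crossing_axis _ hkl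

theorem disjoint_carrier_of_not_transverse {i m k : ℕ} (him : i ≤ m) (hmk : m < k)
    (hi : ¬Transverse (axisHyperplane Γ v i) (axisHyperplane Γ v m))
    (hk : ¬Transverse (axisHyperplane Γ v k) (axisHyperplane Γ v m)) :
    Disjoint (carrier (axisHyperplane Γ v i)) (carrier (axisHyperplane Γ v k)) :=
  Set.disjoint_left.2 fun _ hgi hgk => (crossing_axis_lt him hmk).ne <|
    (crossing_eq_of_not_transverse (axis_mem_carrier i) hgi hi).trans
      (crossing_eq_of_not_transverse hgk (axis_mem_carrier k) hk)

theorem disjoint_carrier_axisHyperplane (hv : ∀ i, ¬Γ.Adj (v i) (v (i + 1))) {i k : ℕ}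
    (hik : i < k) : Disjoint (carrier (axisHyperplane Γ v i)) (carrier (axisHyperplane Γ v k)) := by
  have h_consecutive (i : ℕ) :
      Disjoint (carrier (axisHyperplane Γ v i)) (carrier (axisHyperplane Γ v (i + 1))) :=
    disjoint_carrier_of_not_transverse le_rfl i.lt_succ_self (fun h => Γ.irrefl h.1)
      fun h => hv i h.1.symm
  induction hn : k - i - 1 generalizing i with
  | zero =>
    obtain rfl : k = i + 1 := by omega
    exact h_consecutive i
  | succ n ih =>
    have h_next := ih (i := i + 1) (by omega) (by omega)
    exact disjoint_carrier_of_not_transverse i.le_succ (by omega)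
      (not_transverse_of_disjoint (h_consecutive i)) (not_transverse_of_disjoint h_next.symm)

theorem crossing_eq_of_mem_carrier_axisHyperplane (hv : ∀ i, ¬Γ.Adj (v i) (v (i + 1))) {i k : ℕ}
    (hik : i ≠ k) {g : RAAG Γ} (hg : g ∈ carrier (axisHyperplane Γ v i)) :
    crossing g (axisHyperplane Γ v k) = crossing (axis Γ v i) (axisHyperplane Γ v k) := by
  refine crossing_eq_of_not_transverse hg (axis_mem_carrier i) (not_transverse_of_disjoint ?_)
  rcases hik.lt_or_gt with h | h
  exacts [disjoint_carrier_axisHyperplane hv h, (disjoint_carrier_axisHyperplane hv h).symm]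

theorem adj_of_transverse_axisHyperplane (hv : ∀ i, ¬Γ.Adj (v i) (v (i + 1))) {i k l : ℕ}
    (hik : i < k) (hkl : k < l) {K : Hyperplane Γ} (hi : Transverse (axisHyperplane Γ v i) K)
    (hl : Transverse (axisHyperplane Γ v l) K) : Γ.Adj K.1 (v k) := by
  obtain ⟨-, g, hgi, hgK⟩ := hi
  obtain ⟨-, h, hhl, hhK⟩ := hl
  refine (transverse_of_crossing_ne (K' := axisHyperplane Γ v k) hgK hhK ?_).1
  rw [crossing_eq_of_mem_carrier_axisHyperplane hv hik.ne hgi,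
    crossing_eq_of_mem_carrier_axisHyperplane hv hkl.ne' hhl]
  exact (crossing_axis_lt hik.le hkl).ne

end Axis

section Divergence

/-- A sequence of vertices that follows `Γᶜ`, up to repetitions, and strictly between any two
positions at distance `M` leaves the link of every vertex. -/
structure IsFillingSequence (Γ : SimpleGraph V) (v : ℕ → V) (M : ℕ) : Prop where
  not_adj_succ : ∀ i, ¬Γ.Adj (v i) (v (i + 1))
  exists_not_adj : ∀ j x, ∃ k, 0 < k ∧ k < M ∧ ¬Γ.Adj x (v (j + k))

theorem exists_isFillingSequence (hcon : Γᶜ.Connected) {S : Finset V}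
    (hS : ∀ x, ∃ s ∈ S, ¬Γ.Adj x s) : ∃ v M, IsFillingSequence Γ v M := by
  obtain ⟨a⟩ := hcon.nonempty
  obtain ⟨w, hw⟩ := exists_closed_walk_support_superset hcon.preconnected a S
  -- Since `w` is closed, its periodic repetition stays at `a` for one step after each period.
  refine ⟨fun i => w.getVert (i % (w.length + 1)), 2 * (w.length + 1), fun i => ?_, fun j x => ?_⟩
  · rcases (Nat.lt_add_one_iff.1 (i.mod_lt (Nat.add_one_pos w.length))).lt_or_eq with h | h
    · have h_adj := w.adj_getVert_succ h
      rw [← Nat.mod_add_mod, Nat.mod_eq_of_lt (by omega : i % (w.length + 1) + 1 < w.length + 1)]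
      exact h_adj.2
    · rw [← Nat.mod_add_mod, h, Nat.mod_self, w.getVert_zero, w.getVert_length]
      exact Γ.irrefl
  · obtain ⟨s, hs, hxs⟩ := hS x
    obtain ⟨n, rfl, hn⟩ := SimpleGraph.Walk.mem_support_iff_exists_getVert.1 (hw s hs)
    have h_lower : j < (w.length + 1) * (j / (w.length + 1) + 1) :=
      Nat.lt_mul_div_succ j w.length.succ_pos
    have h_upper : (w.length + 1) * (j / (w.length + 1) + 1) ≤ j + (w.length + 1) := by
      rw [mul_add_one]
      exact Nat.add_le_add_right (Nat.mul_div_le _ _) _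
    refine ⟨n + (w.length + 1) * (j / (w.length + 1) + 1) - j, by omega, by omega, ?_⟩
    rw [Nat.add_sub_cancel' (by omega), Nat.add_mul_mod_self_left, Nat.mod_eq_of_lt (by omega)]
    exact hxs

variable {v : ℕ → V} {M L e : ℕ} {q : ℕ → RAAG Γ}

theorem IsFillingSequence.pos (hv : IsFillingSequence Γ v M) : 0 < M := by
  obtain ⟨k, hk, hkM, -⟩ := hv.exists_not_adj 0 (v 0)
  exact hk.trans hkM

theorem IsFillingSequence.stronglySeparated (hv : IsFillingSequence Γ v M) (j : ℕ) :
    StronglySeparated (axisHyperplane Γ v j) (axisHyperplane Γ v (j + M)) := by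
  intro K hK hK'
  obtain ⟨k, hk, hkM, h_not_adj⟩ := hv.exists_not_adj j K.1
  exact h_not_adj (adj_of_transverse_axisHyperplane hv.not_adj_succ (by omega) (by omega) hK hK')

theorem IsFillingSequence.exists_mem_carrier_add (hv : IsFillingSequence Γ v M)
    (hq : ∀ i < L, wordLength Γ ((q i)⁻¹ * q (i + 1)) = 1) (hqL : q L = axis Γ v e) {i j : ℕ}
    (hiL : i ≤ L) (hje : j + M < e) (hi : q i ∈ carrier (axisHyperplane Γ v j)) :
    ∃ k ≤ L, q k ∈ carrier (axisHyperplane Γ v (j + M)) ∧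
      i + wordLength Γ ((axis Γ v j)⁻¹ * q i) ≤ k + M := by
  have hM := hv.pos
  have h_ne : crossing (q i) (axisHyperplane Γ v (j + M)) ≠
      crossing (q L) (axisHyperplane Γ v (j + M)) := by
    rw [crossing_eq_of_mem_carrier_axisHyperplane hv.not_adj_succ (by omega) hi, hqL]
    exact (crossing_axis_lt (by omega) hje).ne
  obtain ⟨k, hik, hkL, hk⟩ := exists_mem_carrier_of_crossing_ne hiL hq h_ne
  refine ⟨k, hkL, hk, ?_⟩
  have h_path : wordLength Γ ((q i)⁻¹ * q (i + (k - i))) ≤ k - i :=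
    wlen_inv_mul_le_of_steps closure_range_gen fun n hn => (hq (i + n) (by omega)).le
  have h_sep := (hv.stronglySeparated j).wordLength_le (axis_mem_carrier j) hi
    (axis_mem_carrier (j + M)) hk
  rw [Nat.add_sub_cancel' hik] at h_path
  rw [wordLength_inv_axis_mul_axis] at h_sep
  omega

theorem IsFillingSequence.exists_mem_carrier_of_far (hv : IsFillingSequence Γ v M)
    (hq : ∀ i < L, wordLength Γ ((q i)⁻¹ * q (i + 1)) = 1) (hq0 : q 0 = 1)
    (hqL : q L = axis Γ v e) {b k : ℕ} (hbe : b + k * M < e)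
    (h_far : ∀ i ≤ L, 2 * (k * M) ≤ wordLength Γ ((axis Γ v (b + k * M))⁻¹ * q i)) {t : ℕ}
    (htk : t ≤ k) :
    ∃ i ≤ L, q i ∈ carrier (axisHyperplane Γ v (b + t * M)) ∧ t * ((k - 1) * M) ≤ i := by
  induction t with
  | zero =>
    have h_ne : crossing (q 0) (axisHyperplane Γ v b) ≠ crossing (q L) (axisHyperplane Γ v b) := by
      rw [hq0, hqL]
      exact (crossing_axis_lt b.zero_le (by omega)).ne
    obtain ⟨i, -, hiL, hi⟩ := exists_mem_carrier_of_crossing_ne L.zero_le hq h_ne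
    exact ⟨i, hiL, by simpa using hi, by simp⟩
  | succ t ih =>
    obtain ⟨i, hiL, hi, h_cost⟩ := ih (by omega)
    obtain ⟨s, rfl⟩ := Nat.exists_eq_add_of_le htk
    have h_index : b + (t + 1 + s) * M = b + t * M + (1 + s) * M := by ring
    have h_near : b + t * M + M ≤ b + (t + 1 + s) * M := by nlinarith
    obtain ⟨i', hi'L, hi', h_strip⟩ :=
      hv.exists_mem_carrier_add hq hqL hiL (h_near.trans_lt hbe) hi
    -- The strips all start within `k * M` of the centre `axis Γ v (b + k * M)`, so `q i` is at
    -- distance at least `k * M` from `axis Γ v (b + t * M)`.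
    have h_center := wordLength_inv_axis_add_mul_le (v := v) (b + t * M) ((1 + s) * M) (q i)
    rw [← h_index] at h_center
    refine ⟨i', hi'L, by rwa [add_one_mul, ← add_assoc], ?_⟩
    have h_far_i := h_far i hiL
    rw [show t + 1 + s - 1 = t + s by omega] at h_cost ⊢
    nlinarith

theorem IsFillingSequence.sq_le_three_mul_length (hv : IsFillingSequence Γ v M)
    (hq : ∀ i < L, wordLength Γ ((q i)⁻¹ * q (i + 1)) = 1) (hq0 : q 0 = 1) {r k : ℕ} (hr : 0 < r)
    (hqL : q L = axis Γ v (r + r)) (hkr : k * M ≤ r)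
    (h_far : ∀ i ≤ L, 2 * (k * M) ≤ wordLength Γ ((axis Γ v r)⁻¹ * q i)) :
    (k + 1) ^ 2 ≤ 3 * L := by
  have h_chain : k * ((k - 1) * M) ≤ L := by
    obtain ⟨b, rfl⟩ := Nat.exists_eq_add_of_le' hkr
    obtain ⟨i, hiL, -, hi⟩ := hv.exists_mem_carrier_of_far hq hq0 hqL (by omega) h_far le_rfl
    exact hi.trans hiL
  have h_dist : r + r ≤ L := by
    have h_path : wordLength Γ ((q 0)⁻¹ * q (0 + L)) ≤ L :=
      wlen_inv_mul_le_of_steps closure_range_gen fun i hi => (hq (0 + i) (by omega)).le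
    rwa [zero_add, hq0, hqL, inv_one, one_mul, wordLength_axis] at h_path
  have hM := hv.pos
  have hk : k ≤ r := (Nat.le_mul_of_pos_right k hM).trans hkr
  have h_sq : k * (k - 1) ≤ L :=
    (Nat.mul_le_mul_left k (Nat.le_mul_of_pos_right _ hM)).trans h_chain
  have h_expand : (k + 1) ^ 2 = k * (k - 1) + 3 * k + 1 := by
    cases k with
    | zero => rfl
    | succ k => rw [Nat.add_sub_cancel]; ring
  omega

theorem IsFillingSequence.quadratic_le_length (hv : IsFillingSequence Γ v M)
    (hq : ∀ i < L, wordLength Γ ((q i)⁻¹ * q (i + 1)) = 1) (hq0 : q 0 = 1) {r : ℕ}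
    (hqL : q L = axis Γ v (r + r)) {ρ : ℝ} (hρ : 0 < ρ) (hρ_le : ρ ≤ 1)
    (h_far : ∀ i ≤ L, ρ * r ≤ wordLength Γ ((axis Γ v r)⁻¹ * q i)) :
    ρ ^ 2 / (12 * M ^ 2) * r ^ 2 ≤ L := by
  rcases r.eq_zero_or_pos with rfl | hr
  · simp
  have hM : (0 : ℝ) < M := Nat.cast_pos.2 hv.pos
  obtain ⟨k, hk_le, hk_lt⟩ : ∃ k : ℕ, 2 * (k * M) ≤ ρ * r ∧ ρ * r < 2 * ((k + 1) * M) := by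
    refine ⟨⌊ρ * r / (2 * M)⌋₊, ?_, ?_⟩
    · have h_floor := Nat.floor_le (by positivity : 0 ≤ ρ * r / (2 * M))
      rw [le_div_iff₀ (by positivity)] at h_floor
      linarith
    · have h_floor := Nat.lt_floor_add_one (ρ * r / (2 * M))
      rw [div_lt_iff₀ (by positivity)] at h_floor
      linarith
  have hkr : (k * M : ℝ) ≤ r := by nlinarith
  have h_length : ((k : ℝ) + 1) ^ 2 ≤ 3 * L := by
    exact_mod_cast hv.sq_le_three_mul_length hq hq0 hr hqL (by exact_mod_cast hkr) fun i hi => by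
      exact_mod_cast hk_le.trans (h_far i hi)
  rw [div_mul_eq_mul_div, div_le_iff₀ (by positivity), ← mul_pow]
  calc (ρ * r) ^ 2 ≤ (2 * ((k + 1) * (M : ℝ))) ^ 2 := by gcongr
    _ = 4 * (M : ℝ) ^ 2 * (k + 1) ^ 2 := by ring
    _ ≤ 4 * (M : ℝ) ^ 2 * (3 * L) := by gcongr
    _ = L * (12 * (M : ℝ) ^ 2) := by ring

end Divergence

end RAAG

open RAAG in
theorem raag_nonproduct_quadratic_lower_divergence_general {V : Type*} (Γ : SimpleGraph V)
    (hcon : (Γᶜ).Connected) (S : Finset V) (hS : ∀ x, ∃ s ∈ S, ¬Γ.Adj x s) :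
    ∀ ρ : ℝ, 0 < ρ → ρ ≤ 1 →
      ∃ c : ℝ, 0 < c ∧
        ∀ r : ℕ, ∃ x y : RAAG Γ,
          RAAG.wordLength Γ x = r ∧ RAAG.wordLength Γ y = r ∧
          ∀ (L : ℕ) (p : ℕ → RAAG Γ),
            p 0 = x → p L = y →
            (∀ i < L, RAAG.wordLength Γ ((p i)⁻¹ * p (i + 1)) = 1) →
            (∀ i ≤ L, ρ * (r : ℝ) ≤ (RAAG.wordLength Γ (p i) : ℝ)) →
            c * (r : ℝ) ^ 2 ≤ (L : ℝ) := by
  intro ρ hρ hρ_le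
  obtain ⟨v, M, hv⟩ := exists_isFillingSequence hcon hS
  have hM : (0 : ℝ) < M := Nat.cast_pos.2 hv.pos
  refine ⟨ρ ^ 2 / (12 * M ^ 2), by positivity, fun r =>
    ⟨(axis Γ v r)⁻¹, (axis Γ v r)⁻¹ * axis Γ v (r + r), ?_, wordLength_inv_axis_mul_axis r r,
      fun L p hp0 hpL hp h_far => ?_⟩⟩
  · rw [wordLength_inv, wordLength_axis]
  · refine hv.quadratic_le_length (q := fun i => axis Γ v r * p i) (fun i hi => ?_)
      (by simp [hp0]) (by simp [hpL]) hρ hρ_le fun i hi => ?_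
    · simpa [mul_assoc] using hp i hi
    · simpa using h_far i hi

theorem raag_nonproduct_quadratic_lower_divergence {V : Type*} [Fintype V]
    (Γ : SimpleGraph V) (hV : 1 < Fintype.card V) (hcon : (Γᶜ).Connected) :
    ∀ ρ : ℝ, 0 < ρ → ρ ≤ 1 →
      ∃ c : ℝ, 0 < c ∧
        ∀ r : ℕ, ∃ x y : RAAG Γ,
          RAAG.wordLength Γ x = r ∧ RAAG.wordLength Γ y = r ∧
          ∀ (L : ℕ) (p : ℕ → RAAG Γ),
            p 0 = x → p L = y →
            (∀ i < L, RAAG.wordLength Γ ((p i)⁻¹ * p (i + 1)) = 1) →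
            (∀ i ≤ L, ρ * (r : ℝ) ≤ (RAAG.wordLength Γ (p i) : ℝ)) →
            c * (r : ℝ) ^ 2 ≤ (L : ℝ) :=
  raag_nonproduct_quadratic_lower_divergence_general Γ hcon Finset.univ fun x =>
    ⟨x, Finset.mem_univ x, Γ.irrefl⟩
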